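/- Let ⟨G, Eℓ⟩ be a two-player game graph with live edges and let (A, F) be a GR(1) winning condition with A = {A_1, …, A_r} and F = {F_1, …, F_s}, where A_a, F_b ⊆ V. Define Z* := νY_k. ⋂_{b=1}^{s} μ X_b. ⋃_{a=1}^{r} νY_a. [ (F_b ∩ Cpre(Y_k)) ∪ Apre(Y_k, X_b) ∪ ((V ∖ A_a) ∩ Cpre(Y_a)) ]. Then Z* equals the winning region W of Player 0 in the fair adversarial game over ⟨G, Eℓ⟩ for the GR(1) winning condition φ = ( ⋀_{a=1}^{r} □◇A_a ) → ( ⋀_{b=1}^{s} □◇F_b ), i.e. the set of plays π such that if every A_a is visited infinitely often by π then every F_b is visited infinitely often by π. Moreover, there exists a finite-memory Player-0 strategy that wins the fair adversarial game for φ from every vertex of Z*. -/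

import Mathlib

/-- Least fixed point of a set transformer (Knaster–Tarski form). -/
def lfpSet {V : Type*} (f : Set V → Set V) : Set V := sInf {X | f X ⊆ X}

/-- Greatest fixed point of a set transformer (Knaster–Tarski form). -/
def gfpSet {V : Type*} (f : Set V → Set V) : Set V := sSup {X | X ⊆ f X}

/-- A two-player game graph with live edges: vertices are partitioned into
Player-0 vertices `V0` and Player-1 vertices `V1`, every vertex has a successor,
and live edges `El` are Player-1 edges. -/
structure LiveGameGraph (V : Type*) where
  V0 : Set V
  V1 : Set V
  E : V → V → Prop
  El : V → V → Prop
  cover : V0 ∪ V1 = Set.univ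
  disj : V0 ∩ V1 = ∅
  succ_nonempty : ∀ v : V, ∃ w, E v w
  live_sub : ∀ v w, El v w → v ∈ V1 ∧ E v w

namespace LiveGameGraph

variable {V : Type*}

/-- Pre∃0(S) -/
def pre0 (Gm : LiveGameGraph V) (S : Set V) : Set V :=
  {v | v ∈ Gm.V0 ∧ ∃ w, Gm.E v w ∧ w ∈ S}

/-- Pre∀1(S) -/
def pre1 (Gm : LiveGameGraph V) (S : Set V) : Set V :=
  {v | v ∈ Gm.V1 ∧ ∀ w, Gm.E v w → w ∈ S}

/-- Cpre(S) -/
def cpre (Gm : LiveGameGraph V) (S : Set V) : Set V := Gm.pre0 S ∪ Gm.pre1 S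

/-- Lpre∃(T) -/
def lpre (Gm : LiveGameGraph V) (T : Set V) : Set V :=
  {v | ∃ w, Gm.El v w ∧ w ∈ T}

/-- Apre(S,T) -/
def apre (Gm : LiveGameGraph V) (S T : Set V) : Set V :=
  Gm.cpre T ∪ (Gm.lpre T ∩ Gm.pre1 S)

end LiveGameGraph

namespace LiveGameGraph

variable {V : Type*}

/-- A play is strongly transition fair if every live edge whose source is visited
infinitely often is itself taken infinitely often. -/
def StronglyFair (Gm : LiveGameGraph V) (π : ℕ → V) : Prop :=
  ∀ v w, Gm.El v w → {i | π i = v}.Infinite → {i | π i = v ∧ π (i + 1) = w}.Infinite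

/-- A Player-0 strategy: given the history (the prefix before the current vertex)
and the current vertex, it chooses an `E`-successor whenever the current vertex
belongs to Player 0. -/
def Strategy0 (Gm : LiveGameGraph V) (ρ : List V → V → V) : Prop :=
  ∀ h v, v ∈ Gm.V0 → Gm.E v (ρ h v)

/-- A Player-1 strategy. -/
def Strategy1 (Gm : LiveGameGraph V) (ρ : List V → V → V) : Prop :=
  ∀ h v, v ∈ Gm.V1 → Gm.E v (ρ h v)

/-- The play compliant with the strategies `ρ0` and `ρ1` starting at `v0`. -/
def Compliant (Gm : LiveGameGraph V) (ρ0 ρ1 : List V → V → V) (v0 : V)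
    (π : ℕ → V) : Prop :=
  π 0 = v0 ∧ ∀ i : ℕ,
    (π i ∈ Gm.V0 → π (i + 1) = ρ0 (List.ofFn fun j : Fin i => π j.1) (π i)) ∧
    (π i ∈ Gm.V1 → π (i + 1) = ρ1 (List.ofFn fun j : Fin i => π j.1) (π i))

/-- Player 0 wins the fair adversarial game for the winning condition `φ`
from `v0` using the strategy `ρ0`. -/
def WinsFrom (Gm : LiveGameGraph V) (φ : (ℕ → V) → Prop)
    (ρ0 : List V → V → V) (v0 : V) : Prop :=
  Gm.Strategy0 ρ0 ∧ ∀ ρ1, Gm.Strategy1 ρ1 → ∀ π, Gm.Compliant ρ0 ρ1 v0 π →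
    (Gm.StronglyFair π → φ π)

/-- The winning region of Player 0 in the fair adversarial game for `φ`. -/
def WinningRegion (Gm : LiveGameGraph V) (φ : (ℕ → V) → Prop) : Set V :=
  {v0 | ∃ ρ0, Gm.WinsFrom φ ρ0 v0}

end LiveGameGraph

/-!
A vertex of a least fixed point carries the ordinal stage at which it enters, and a vertex outside
a greatest fixed point carries such a stage for the complement; both players win by never
increasing a measure built from these stages.

From `Z*` Player 0 pursues the goals in cyclic order. For a single goal the stage of `μX_b`, refined
lexicographically by the index `a` of the assumption that admits the vertex, either drops, or drops
along some live edge, or stays put at a vertex outside `A_a`. On a fair play that never meets the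
goal the measure is finally constant, so that some `A_a` is visited only finitely often. The goal
currently pursued is the only memory required.

Outside `Z*` Player 1 measures vertices by the stage of `νY_k`, refined by a goal `b` that witnesses
removal, and takes in turn her edges that lower the stage or avoid the fixed point `μX_b`, none of
which increases the measure. Once the measure is constant, the play remains in `Y_k` and outside
`μX_b`. There `F_b` cannot be visited, every live edge is among those taken in turn, and for each
`a` the stages of `νY_a` would descend forever if `A_a` were visited only finitely often.
-/

open Filter

universe u

section FixedPoints

variable {V : Type u} {f g : Set V → Set V} {X : Set V}

theorem lfpSet_subset (h : f X ⊆ X) : lfpSet f ⊆ X :=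
  sInf_le h

theorem subset_gfpSet (h : X ⊆ f X) : X ⊆ gfpSet f :=
  le_sSup (a := X) h

theorem map_lfpSet (hf : Monotone f) : f (lfpSet f) = lfpSet f :=
  OrderHom.map_lfp ⟨f, hf⟩

theorem map_gfpSet (hf : Monotone f) : f (gfpSet f) = gfpSet f :=
  OrderHom.map_gfp ⟨f, hf⟩

theorem lfpSet_mono (h : ∀ S, f S ⊆ g S) : lfpSet f ⊆ lfpSet g :=
  le_sInf fun _ hX => lfpSet_subset ((h _).trans hX)

theorem gfpSet_mono (h : ∀ S, f S ⊆ g S) : gfpSet f ⊆ gfpSet g :=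
  sSup_le fun _ hX => subset_gfpSet (le_trans hX (h _))

theorem compl_gfpSet (f : Set V → Set V) : (gfpSet f)ᶜ = lfpSet fun S => (f Sᶜ)ᶜ := by
  apply Set.Subset.antisymm
  · exact le_sInf fun X hX =>
      Set.compl_subset_comm.mp (subset_gfpSet (Set.compl_subset_comm.mp hX))
  · refine Set.subset_compl_comm.mp (sSup_le fun X hX => Set.subset_compl_comm.mp ?_)
    exact lfpSet_subset (by simpa only [compl_compl] using Set.compl_subset_compl.mpr hX)

theorem monotone_compl_map_compl (hf : Monotone f) : Monotone fun S => (f Sᶜ)ᶜ :=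
  fun _ _ h => Set.compl_subset_compl.mpr (hf (Set.compl_subset_compl.mpr h))

open OrdinalApprox in
theorem exists_rank_lfpSet (hf : Monotone f) :
    ∃ rk : V → Ordinal.{u}, ∀ o v,
      v ∈ f {w | w ∈ lfpSet f ∧ rk w < o} ↔ v ∈ lfpSet f ∧ rk v ≤ o := by
  let U : Ordinal.{u} → Set V := lfpApprox ⟨f, hf⟩ ⊥
  have hU : Monotone U := lfpApprox_mono_right _
  have mem_U (o v) : v ∈ U o ↔ ∃ o' < o, v ∈ f (U o') := by
    simp only [U]
    rw [lfpApprox]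
    simp
  have U_subset (o) : U o ⊆ lfpSet f :=
    lfpApprox_le_of_mem_fixedPoints _ (map_lfpSet hf) bot_le o
  have exists_stage : ∀ v ∈ lfpSet f, ∃ o, v ∈ f (U o) := fun v hv =>
    ⟨_, (congrArg f (lfpApprox_ord_eq_lfp ⟨f, hf⟩)).ge ((map_lfpSet hf).ge hv)⟩
  let rk : V → Ordinal.{u} := fun v => sInf {o | v ∈ f (U o)}
  have mem_stage (o v) : v ∈ f (U o) ↔ v ∈ lfpSet f ∧ rk v ≤ o := by
    refine ⟨fun h => ⟨map_lfpSet hf ▸ hf (U_subset o) h, csInf_le' h⟩, fun ⟨hv, ho⟩ => ?_⟩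
    exact hf (hU ho) (csInf_mem (s := {o | v ∈ f (U o)}) (exists_stage v hv))
  refine ⟨rk, fun o v => ?_⟩
  have stage_eq : {w | w ∈ lfpSet f ∧ rk w < o} = U o := by
    ext w
    simp only [mem_U, mem_stage, Set.mem_ofPred_eq]
    exact ⟨fun ⟨hw, h⟩ => ⟨rk w, h, hw, le_rfl⟩, fun ⟨o', h, hw, h'⟩ => ⟨hw, h'.trans_lt h⟩⟩
  rw [stage_eq, mem_stage]

theorem exists_rank_compl_gfpSet (hf : Monotone f) :
    ∃ rk : V → Ordinal.{u}, ∀ v ∉ gfpSet f, v ∉ f {w | w ∉ gfpSet f ∧ rk w < rk v}ᶜ := by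
  obtain ⟨rk, h⟩ := exists_rank_lfpSet (monotone_compl_map_compl hf)
  rw [← compl_gfpSet] at h
  exact ⟨rk, fun v hv => (h (rk v) v).mpr ⟨hv, le_rfl⟩⟩

/-- The part of `X` at stages strictly below that of `p`, where `m` measures vertices by an ordinal
stage followed by an index that breaks ties. -/
def lowerStages {ι : Type*} (X : Set V) (m : V → Ordinal.{u} ×ₗ ι) (p : Ordinal.{u} ×ₗ ι) : Set V :=
  {w | w ∈ X ∧ (ofLex (m w)).1 < (ofLex p).1}

theorem lt_of_mem_lowerStages {ι : Type*} [LT ι] {m : V → Ordinal.{u} ×ₗ ι} {p : Ordinal.{u} ×ₗ ι}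
    {w : V} (h : w ∈ lowerStages X m p) : m w < p :=
  Prod.Lex.lt_iff.mpr (Or.inl h.2)

theorem exists_measure_lfpSet_iUnion {ι : Type*} [LinearOrder ι] [WellFoundedLT ι] [Nonempty ι]
    {g : ι → Set V → Set V} (hg : ∀ a, Monotone (g a)) :
    ∃ m : V → Ordinal.{u} ×ₗ ι, ∀ v ∈ lfpSet (fun S => ⋃ a, g a S),
      let G := g (ofLex (m v)).2 (lowerStages (lfpSet fun S => ⋃ a, g a S) m (m v))
      v ∈ G ∧ ∀ w ∈ G, w ∈ lfpSet (fun S => ⋃ a, g a S) ∧ m w ≤ m v := by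
  obtain ⟨rk, hrk⟩ := exists_rank_lfpSet (f := fun S => ⋃ a, g a S)
    fun _ _ h => Set.iUnion_mono fun a => hg a h
  set X := lfpSet fun S => ⋃ a, g a S
  simp only [Set.mem_iUnion] at hrk
  have exists_least (v) : ∃ a, v ∈ X → v ∈ g a {w | w ∈ X ∧ rk w < rk v} ∧
      ∀ a', v ∈ g a' {w | w ∈ X ∧ rk w < rk v} → a ≤ a' := by
    by_cases hv : v ∈ X
    · obtain ⟨a, ha, hmin⟩ := WellFounded.has_min (wellFounded_lt (α := ι))
        {a | v ∈ g a {w | w ∈ X ∧ rk w < rk v}} ((hrk _ v).mpr ⟨hv, le_rfl⟩)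
      exact ⟨a, fun _ => ⟨ha, fun a' h => not_lt.mp (hmin a' h)⟩⟩
    · exact ⟨Classical.arbitrary ι, fun h => absurd h hv⟩
  choose idx hidx using exists_least
  refine ⟨fun v => toLex (rk v, idx v), fun v hv => ⟨(hidx v hv).1, fun w hw => ?_⟩⟩
  obtain ⟨hwX, hle⟩ := (hrk (rk v) w).mp ⟨idx v, hw⟩
  refine ⟨hwX, Prod.Lex.toLex_le_toLex'.mpr ⟨hle, fun heq => (hidx w hwX).2 _ ?_⟩⟩
  dsimp only at heq
  rw [heq]
  exact hw

end FixedPoints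

section InfinitelyOften

theorem eventually_of_frequently_of_step {p : ℕ → Prop} (hp : ∃ᶠ i in atTop, p i)
    (hstep : ∀ᶠ i in atTop, p i → p (i + 1)) : ∀ᶠ i in atTop, p i := by
  obtain ⟨N, hN⟩ := eventually_atTop.mp hstep
  obtain ⟨n, hn, hpn⟩ := frequently_atTop.mp hp N
  exact eventually_atTop.mpr ⟨n, fun i hi => Nat.le_induction hpn
    (fun j hj => hN j (hn.trans hj)) i hi⟩

theorem eventually_succ_iff {p : ℕ → Prop} :
    (∀ᶠ i in atTop, p (i + 1)) ↔ ∀ᶠ i in atTop, p i :=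
  eventually_map.symm.trans (by rw [map_add_atTop_eq_nat])

variable {V : Type*}

theorem eventually_frequently_eq [Finite V] (π : ℕ → V) :
    ∀ᶠ i in atTop, ∃ᶠ j in atTop, π j = π i := by
  have (v : V) : ∀ᶠ i in atTop, π i = v → ∃ᶠ j in atTop, π j = v := by
    by_cases h : ∃ᶠ j in atTop, π j = v
    · exact Eventually.of_forall fun _ _ => h
    · exact (not_frequently.mp h).mono fun _ hi hv => absurd hv hi
  filter_upwards [eventually_all.mpr this] with i hi using hi (π i) rfl

theorem exists_frequently_eq_and_eventually_le [Finite V] {P : Type*} [LinearOrder P]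
    (π : ℕ → V) (m : V → P) :
    ∃ v, (∃ᶠ i in atTop, π i = v) ∧ ∀ᶠ i in atTop, m v ≤ m (π i) := by
  have hrec := eventually_frequently_eq π
  obtain ⟨v, hv, hmin⟩ := Set.exists_min_image {v | ∃ᶠ i in atTop, π i = v} m (Set.toFinite _)
    (hrec.exists.imp' π fun _ h => h)
  exact ⟨v, hv, hrec.mono fun i hi => hmin (π i) hi⟩

open Fin.CommRing in
theorem frequently_round_robin {n : ℕ} [NeZero n] {q : ℕ → Fin n} {P : Fin n → ℕ → Prop}
    [∀ k, DecidablePred (P k)] (hq : ∀ i, q (i + 1) = if P (q i) i then q i + 1 else q i)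
    (hP : ∃ᶠ i in atTop, P (q i) i) (k : Fin n) : ∃ᶠ i in atTop, P k i := by
  have frequently_served {k} (hk : ∃ᶠ i in atTop, q i = k) :
      ∃ᶠ i in atTop, q i = k ∧ P k i := by
    by_contra hnot
    rw [not_frequently] at hnot
    have hstay : ∀ᶠ i in atTop, q i = k := eventually_of_frequently_of_step hk
      (hnot.mono fun i hi hqi => by rw [hq, if_neg (hqi ▸ fun h => hi ⟨hqi, hqi ▸ h⟩), hqi])
    exact hP ((hnot.and hstay).mono fun i hi h => hi.1 ⟨hi.2, hi.2 ▸ h⟩)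
  have frequently_next {k} (hk : ∃ᶠ i in atTop, q i = k) : ∃ᶠ i in atTop, q i = k + 1 := by
    intro hnot
    refine frequently_served hk ((eventually_succ_iff.mpr hnot).mono fun i hi h => hi ?_)
    obtain ⟨rfl, hPi⟩ := h
    rw [hq, if_pos hPi]
  obtain ⟨i₀, hi₀⟩ := (eventually_frequently_eq q).exists
  have frequently_add (j : ℕ) : ∃ᶠ i in atTop, q i = q i₀ + (j : Fin n) := by
    induction j with
    | zero => simpa using hi₀
    | succ j ih => simpa only [Nat.cast_add, Nat.cast_one, add_assoc] using frequently_next ih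
  have hk := frequently_add (k - q i₀ : Fin n)
  rw [Fin.cast_val_eq_self, add_sub_cancel] at hk
  exact (frequently_served hk).mono fun _ h => h.2

theorem exists_eventually_eq_of_succ_le [Finite V] {P : Type*} [LinearOrder P] (π : ℕ → V)
    (m : V → P) (h : ∀ i, m (π (i + 1)) ≤ m (π i)) : ∃ v, ∀ᶠ i in atTop, m (π i) = m v := by
  obtain ⟨v, hv, hmin⟩ := exists_frequently_eq_and_eventually_le π m
  refine ⟨v, eventually_of_frequently_of_step (hv.mono fun _ hi => congrArg m hi) ?_⟩
  filter_upwards [eventually_succ_iff.mpr hmin] with i hle heq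
  exact le_antisymm ((h i).trans heq.le) hle

theorem frequently_eq_and_succ_eq {π e : ℕ → V} {v w : V} [DecidableEq V]
    (hstep : ∀ i, π i = v → π (i + 1) = e (Nat.count (fun j => π j = v) i))
    (hv : ∃ᶠ i in atTop, π i = v) (hw : ∃ᶠ n in atTop, e n = w) :
    ∃ᶠ i in atTop, π i = v ∧ π (i + 1) = w := by
  refine frequently_atTop.mpr fun N => ?_
  obtain ⟨k, hk, rfl⟩ := frequently_atTop.mp hw N
  have hinf : {i | π i = v}.Infinite := Nat.frequently_atTop_iff_infinite.mp hv
  have hvisit : π (Nat.nth (fun j => π j = v) k) = v := Nat.nth_mem_of_infinite hinf k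
  refine ⟨Nat.nth (fun j => π j = v) k, le_trans hk (Nat.nth_strictMono hinf).le_apply, hvisit, ?_⟩
  rw [hstep _ hvisit, Nat.count_nth_of_infinite hinf]

theorem exists_seq_frequently_eq {C : Set V} (hC : C.Countable) (hne : C.Nonempty) :
    ∃ e : ℕ → V, (∀ n, e n ∈ C) ∧ ∀ w ∈ C, ∃ᶠ n in atTop, e n = w := by
  obtain ⟨g, rfl⟩ := hC.exists_eq_range hne
  refine ⟨fun n => g n.unpair.1, fun n => ⟨_, rfl⟩, ?_⟩
  rintro _ ⟨k, rfl⟩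
  exact frequently_atTop.mpr fun N => ⟨Nat.pair k N, Nat.right_le_pair k N, by simp⟩

theorem exists_fin_enumeration {κ : Type*} [Nonempty κ] [Finite V] (F : κ → V) :
    ∃ (n : ℕ) (_ : NeZero n) (p : Fin n → κ), ∀ b, ∃ k, F (p k) = F b := by
  have e := Finite.equivFin (Set.range F)
  choose p hp using fun k => (e.symm k).2
  refine ⟨_, ⟨Nat.card_pos.ne'⟩, p, fun b => ⟨e ⟨F b, b, rfl⟩, ?_⟩⟩
  rw [hp, e.symm_apply_apply]

end InfinitelyOften

namespace LiveGameGraph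

variable {V : Type u} (Gm : LiveGameGraph V) {S S' T T' : Set V} {v : V}

section Predecessors

theorem mem_V0_or_mem_V1 (v : V) : v ∈ Gm.V0 ∨ v ∈ Gm.V1 :=
  Gm.cover.ge (Set.mem_univ v)

variable {Gm}

theorem notMem_V1_of_mem_V0 (h0 : v ∈ Gm.V0) : v ∉ Gm.V1 :=
  fun h1 => Gm.disj.le ⟨h0, h1⟩

theorem mem_cpre_iff_of_mem_V0 (h0 : v ∈ Gm.V0) : v ∈ Gm.cpre S ↔ ∃ w, Gm.E v w ∧ w ∈ S :=
  ⟨fun h => h.elim And.right fun h1 => absurd h1.1 (notMem_V1_of_mem_V0 h0),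
    fun h => Or.inl ⟨h0, h⟩⟩

theorem mem_cpre_iff_of_mem_V1 (h1 : v ∈ Gm.V1) : v ∈ Gm.cpre S ↔ ∀ w, Gm.E v w → w ∈ S :=
  ⟨fun h => h.elim (fun h0 => absurd h1 (notMem_V1_of_mem_V0 h0.1)) And.right,
    fun h => Or.inr ⟨h1, h⟩⟩

variable (Gm)

theorem cpre_mono (h : S ⊆ T) : Gm.cpre S ⊆ Gm.cpre T := by
  rintro v (⟨h0, w, hw, hS⟩ | ⟨h1, hS⟩)
  · exact Or.inl ⟨h0, w, hw, h hS⟩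
  · exact Or.inr ⟨h1, fun w hw => h (hS w hw)⟩

theorem apre_mono (hS : S ⊆ S') (hT : T ⊆ T') : Gm.apre S T ⊆ Gm.apre S' T' := by
  rintro v (hv | ⟨⟨w, hw, hwT⟩, h1, hall⟩)
  · exact Or.inl (Gm.cpre_mono hT hv)
  · exact Or.inr ⟨⟨w, hw, hT hwT⟩, h1, fun w hw => hS (hall w hw)⟩

theorem exists_positional_of_mem_cpre {Z : Set V} {T : V → Set V}
    (hZ : ∀ v ∈ Z, v ∈ Gm.cpre (T v)) :
    ∃ c : V → V, (∀ v, Gm.E v (c v)) ∧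
      ∀ v ∈ Z, ∀ w, Gm.E v w → (v ∈ Gm.V0 → w = c v) → w ∈ T v := by
  have exists_choice (v) : ∃ w, Gm.E v w ∧ ((∃ w', Gm.E v w' ∧ w' ∈ T v) → w ∈ T v) := by
    by_cases h : ∃ w', Gm.E v w' ∧ w' ∈ T v
    · exact h.imp fun w hw => ⟨hw.1, fun _ => hw.2⟩
    · exact (Gm.succ_nonempty v).imp fun w hw => ⟨hw, fun h' => absurd h' h⟩
  choose c hcE hcT using exists_choice
  refine ⟨c, hcE, fun v hv w hvw hwc => ?_⟩
  rcases Gm.mem_V0_or_mem_V1 v with h0 | h1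
  · exact hwc h0 ▸ hcT v ((mem_cpre_iff_of_mem_V0 h0).mp (hZ v hv))
  · exact (mem_cpre_iff_of_mem_V1 h1).mp (hZ v hv) w hvw

end Predecessors

section Plays

theorem ofFn_fin_succ (π : ℕ → V) (i : ℕ) :
    (List.ofFn fun j : Fin (i + 1) => π j.1) = (List.ofFn fun j : Fin i => π j.1) ++ [π i] := by
  rw [List.ofFn_succ']
  simp [List.concat_eq_append]

theorem exists_seq_of_history (next : List V → V → V) (v₀ : V) :
    ∃ π : ℕ → V, π 0 = v₀ ∧ ∀ i, π (i + 1) = next (List.ofFn fun j : Fin i => π j.1) (π i) := by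
  let step : List V × V → List V × V := fun p => (p.1 ++ [p.2], next p.1 p.2)
  let state : ℕ → List V × V := fun i => step^[i] ([], v₀)
  have state_succ (i) : state (i + 1) = step (state i) := Function.iterate_succ_apply' step i _
  have history (i) : (state i).1 = List.ofFn fun j : Fin i => (state j.1).2 := by
    induction i with
    | zero => simp [state]
    | succ i ih => rw [ofFn_fin_succ (fun j => (state j).2), ← ih, state_succ]
  exact ⟨fun i => (state i).2, rfl, fun i => by simp only [← history, state_succ, step]⟩

open Classical in
theorem count_ofFn_fin (π : ℕ → V) (v : V) (i : ℕ) :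
    (List.ofFn fun j : Fin i => π j.1).count v = Nat.count (fun j => π j = v) i := by
  induction i with
  | zero => simp
  | succ i ih =>
    rw [ofFn_fin_succ, List.count_append, ih, Nat.count_succ, List.count_singleton]
    simp

variable {Gm} in
theorem Compliant.edge {ρ0 ρ1 : List V → V → V} {v₀ : V} {π : ℕ → V}
    (h : Gm.Compliant ρ0 ρ1 v₀ π) (h0 : Gm.Strategy0 ρ0) (h1 : Gm.Strategy1 ρ1) (i : ℕ) :
    Gm.E (π i) (π (i + 1)) := by
  rcases Gm.mem_V0_or_mem_V1 (π i) with hv | hv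
  · exact (h.2 i).1 hv ▸ h0 _ _ hv
  · exact (h.2 i).2 hv ▸ h1 _ _ hv

theorem exists_compliant (ρ0 ρ1 : List V → V → V) (v₀ : V) : ∃ π, Gm.Compliant ρ0 ρ1 v₀ π := by
  classical
  obtain ⟨π, hπ₀, hπ⟩ :=
    exists_seq_of_history (fun h v => if v ∈ Gm.V0 then ρ0 h v else ρ1 h v) v₀
  refine ⟨π, hπ₀, fun i => ⟨fun h0 => by rw [hπ, if_pos h0], fun h1 => ?_⟩⟩
  rw [hπ, if_neg fun h0 => notMem_V1_of_mem_V0 h0 h1]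

/-- Player 1 is fair towards the sets `C` on the play `π`: every edge of Player 1 from a recurrent
vertex `v` into `C v` is taken infinitely often, whether or not it is live. -/
def FairToward (C : V → Set V) (π : ℕ → V) : Prop :=
  ∀ v ∈ Gm.V1, (∃ᶠ i in atTop, π i = v) → ∀ w ∈ C v, Gm.E v w →
    ∃ᶠ i in atTop, π i = v ∧ π (i + 1) = w

theorem exists_strategy1_round_robin [Countable V] (C : V → Set V) :
    ∃ ρ1, Gm.Strategy1 ρ1 ∧ ∀ ρ0 v₀ π, Gm.Compliant ρ0 ρ1 v₀ π →
      (∀ i, π i ∈ Gm.V1 → (∃ w ∈ C (π i), Gm.E (π i) w) → π (i + 1) ∈ C (π i)) ∧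
      Gm.FairToward C π := by
  classical
  have exists_enumeration (v) : ∃ e : ℕ → V, (∀ n, Gm.E v (e n)) ∧
      ((∃ w ∈ C v, Gm.E v w) → ∀ n, e n ∈ C v) ∧
      ∀ w ∈ C v, Gm.E v w → ∃ᶠ n in atTop, e n = w := by
    by_cases h : ∃ w ∈ C v, Gm.E v w
    · obtain ⟨e, he, hfreq⟩ := exists_seq_frequently_eq
        (C := {w | w ∈ C v ∧ Gm.E v w}) (Set.to_countable _) h
      exact ⟨e, fun n => (he n).2, fun _ n => (he n).1, fun w hw hvw => hfreq w ⟨hw, hvw⟩⟩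
    · obtain ⟨w, hw⟩ := Gm.succ_nonempty v
      exact ⟨fun _ => w, fun _ => hw, fun h' => absurd h' h,
        fun w' hw' hvw' => absurd ⟨w', hw', hvw'⟩ h⟩
  choose e heE heC hfreq using exists_enumeration
  refine ⟨fun h v => e v (h.count v), fun h v _ => heE v _, fun ρ0 v₀ π hπ => ?_⟩
  have hstep (i) (h1 : π i ∈ Gm.V1) : π (i + 1) = e (π i) (Nat.count (fun j => π j = π i) i) :=
    ((hπ.2 i).2 h1).trans (congrArg (e (π i)) (count_ofFn_fin π (π i) i))
  refine ⟨fun i h1 hC => hstep i h1 ▸ heC _ hC _, fun v h1 hv w hw hvw => ?_⟩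
  exact frequently_eq_and_succ_eq (fun i hi => by subst hi; exact hstep i h1) hv (hfreq v w hw hvw)

end Plays

section Fixpoint

variable {ι κ : Type*}

/-- The body `(F ∩ Cpre Y) ∪ Apre (Y, X) ∪ (Aᶜ ∩ Cpre W)` of the fixpoint expression; `Y`, `X`, `W`
are the variables `Y_k`, `X_b`, `Y_a` of the paper. -/
def gr1Body (A F Y X W : Set V) : Set V :=
  (F ∩ Gm.cpre Y) ∪ Gm.apre Y X ∪ (Aᶜ ∩ Gm.cpre W)

/-- The fixpoint `μX. ⋃ₐ νW. gr1Body`: from here Player 0 can reach the goal `F` and then stay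
in `Y`, unless some assumption `A a` is visited only finitely often. -/
def gr1Reach (A : ι → Set V) (F Y : Set V) : Set V :=
  lfpSet fun X => ⋃ a, gfpSet (Gm.gr1Body (A a) F Y X)

/-- The one-round operator `⋂_b μX_b. ⋃_a νY_a. gr1Body` in the variable `Y = Y_k`. -/
def gr1Round (A : ι → Set V) (F : κ → Set V) (Y : Set V) : Set V :=
  ⋂ b, Gm.gr1Reach A (F b) Y

/-- The fixpoint `Z*` of the paper, for families of assumptions `A` and goals `F` over arbitrary
index types. -/
def gr1Fixpoint (A : ι → Set V) (F : κ → Set V) : Set V :=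
  gfpSet (Gm.gr1Round A F)

/-- The GR(1) winning condition with assumptions `A` and goals `F`. -/
def GR1 (A : ι → Set V) (F : κ → Set V) (π : ℕ → V) : Prop :=
  (∀ a, ∃ᶠ i in atTop, π i ∈ A a) → ∀ b, ∃ᶠ i in atTop, π i ∈ F b

theorem gr1Body_mono (A F : Set V) {Y Y' X X' W W' : Set V} (hY : Y ⊆ Y') (hX : X ⊆ X')
    (hW : W ⊆ W') : Gm.gr1Body A F Y X W ⊆ Gm.gr1Body A F Y' X' W' :=
  Set.union_subset_union
    (Set.union_subset_union (Set.inter_subset_inter_right _ (Gm.cpre_mono hY)) (Gm.apre_mono hY hX))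
    (Set.inter_subset_inter_right _ (Gm.cpre_mono hW))

theorem monotone_gr1Body (A F Y X : Set V) : Monotone (Gm.gr1Body A F Y X) :=
  fun _ _ hW => Gm.gr1Body_mono A F le_rfl le_rfl hW

theorem monotone_gfpSet_gr1Body (A F Y : Set V) :
    Monotone fun X => gfpSet (Gm.gr1Body A F Y X) :=
  fun _ _ hX => gfpSet_mono fun _ => Gm.gr1Body_mono A F le_rfl hX le_rfl

theorem monotone_gr1Reach (A : ι → Set V) (F : Set V) : Monotone (Gm.gr1Reach A F) :=
  fun _ _ hY => lfpSet_mono fun _ => Set.iUnion_mono fun _ => gfpSet_mono fun _ =>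
    Gm.gr1Body_mono _ _ hY le_rfl le_rfl

theorem monotone_gr1Round (A : ι → Set V) (F : κ → Set V) : Monotone (Gm.gr1Round A F) :=
  fun _ _ hY => Set.iInter_mono fun b => Gm.monotone_gr1Reach A (F b) hY

theorem iUnion_gfpSet_gr1Body_gr1Reach (A : ι → Set V) (F Y : Set V) :
    ⋃ a, gfpSet (Gm.gr1Body (A a) F Y (Gm.gr1Reach A F Y)) = Gm.gr1Reach A F Y :=
  map_lfpSet fun _ _ hX => Set.iUnion_mono fun a => Gm.monotone_gfpSet_gr1Body (A a) F Y hX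

theorem gfpSet_gr1Body_subset_gr1Reach (A : ι → Set V) (F Y : Set V) (a : ι) :
    gfpSet (Gm.gr1Body (A a) F Y (Gm.gr1Reach A F Y)) ⊆ Gm.gr1Reach A F Y :=
  (Set.subset_iUnion (fun a => gfpSet (Gm.gr1Body (A a) F Y (Gm.gr1Reach A F Y))) a).trans
    (Gm.iUnion_gfpSet_gr1Body_gr1Reach A F Y).le

theorem gfpSet_gr1Body_gr1Reach (A : ι → Set V) (F Y : Set V) (a : ι) :
    gfpSet (Gm.gr1Body (A a) F Y (Gm.gr1Reach A F Y)) = Gm.gr1Reach A F Y := by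
  refine (Gm.gfpSet_gr1Body_subset_gr1Reach A F Y a).antisymm
    ((Gm.iUnion_gfpSet_gr1Body_gr1Reach A F Y).ge.trans (Set.iUnion_subset fun a' v hv => ?_))
  rw [← map_gfpSet (Gm.monotone_gr1Body _ _ _ _)] at hv ⊢
  -- A step inside the branch of another assumption is a `Cpre` step into the whole fixed point.
  rcases hv with hv | ⟨_, hv⟩
  · exact Or.inl hv
  · exact Or.inl (Or.inr (Or.inl
      (Gm.cpre_mono (Gm.gfpSet_gr1Body_subset_gr1Reach A F Y a') hv)))

theorem gr1Body_gr1Reach (A : ι → Set V) (F Y : Set V) (a : ι) :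
    Gm.gr1Body (A a) F Y (Gm.gr1Reach A F Y) (Gm.gr1Reach A F Y) = Gm.gr1Reach A F Y := by
  have h := map_gfpSet (Gm.monotone_gr1Body (A a) F Y (Gm.gr1Reach A F Y))
  rwa [gfpSet_gr1Body_gr1Reach] at h

theorem inter_cpre_subset_gr1Reach [Nonempty ι] (A : ι → Set V) (F Y : Set V) :
    F ∩ Gm.cpre Y ⊆ Gm.gr1Reach A F Y := fun _ h =>
  (Gm.gr1Body_gr1Reach A F Y (Classical.arbitrary ι)).le (Or.inl (Or.inl h))

theorem apre_gr1Reach_subset_gr1Reach [Nonempty ι] (A : ι → Set V) (F Y : Set V) :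
    Gm.apre Y (Gm.gr1Reach A F Y) ⊆ Gm.gr1Reach A F Y := fun _ h =>
  (Gm.gr1Body_gr1Reach A F Y (Classical.arbitrary ι)).le (Or.inl (Or.inr h))

theorem gr1Reach_subset_gr1Reach {A : ι → Set V} {F' Y : Set V} (hY : Y ⊆ Gm.gr1Reach A F' Y)
    (F : Set V) : Gm.gr1Reach A F Y ⊆ Gm.gr1Reach A F' Y := by
  refine lfpSet_subset (Set.Subset.trans ?_ (Gm.iUnion_gfpSet_gr1Body_gr1Reach A F' Y).le)
  refine Set.iUnion_mono fun a => gfpSet_mono fun W => ?_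
  rintro v ((⟨_, hv⟩ | hv) | hv)
  · exact Or.inl (Or.inr (Or.inl (Gm.cpre_mono hY hv)))
  · exact Or.inl (Or.inr hv)
  · exact Or.inr hv

theorem gr1Reach_gr1Fixpoint (A : ι → Set V) (F : κ → Set V) (b : κ) :
    Gm.gr1Reach A (F b) (Gm.gr1Fixpoint A F) = Gm.gr1Fixpoint A F := by
  have hfix : Gm.gr1Round A F (Gm.gr1Fixpoint A F) = Gm.gr1Fixpoint A F :=
    map_gfpSet (Gm.monotone_gr1Round A F)
  have hsub (b') : Gm.gr1Fixpoint A F ⊆ Gm.gr1Reach A (F b') (Gm.gr1Fixpoint A F) :=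
    hfix.ge.trans (Set.iInter_subset _ b')
  refine Set.Subset.antisymm (Set.Subset.trans ?_ hfix.le) (hsub b)
  exact Set.subset_iInter fun b' => Gm.gr1Reach_subset_gr1Reach (hsub b') (F b)

end Fixpoint

section Soundness

variable {ι κ P : Type*}

/-- A move `v → w` makes progress for the measure `m` if it decreases `m`, or if some live edge
from `v` does, or if it keeps `m` while `v` avoids the set `B` attached to the current value. -/
def Progress [LT P] (m : V → P) (B : P → Set V) (v w : V) : Prop :=
  m w < m v ∨ (∃ u, Gm.El v u ∧ m u < m v) ∨ (v ∉ B (m v) ∧ m w = m v)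

variable {Gm} in
theorem StronglyFair.frequently {π : ℕ → V} (hπ : Gm.StronglyFair π) {v w : V} (hl : Gm.El v w)
    (hv : ∃ᶠ i in atTop, π i = v) : ∃ᶠ i in atTop, π i = v ∧ π (i + 1) = w :=
  Nat.frequently_atTop_iff_infinite.mpr (hπ v w hl (Nat.frequently_atTop_iff_infinite.mp hv))

variable {Gm} in
theorem StronglyFair.exists_eventually_notMem_of_progress [Finite V] [LinearOrder P] {m : V → P}
    {B : P → Set V} {π : ℕ → V} (hfair : Gm.StronglyFair π)
    (hprog : ∀ᶠ i in atTop, Gm.Progress m B (π i) (π (i + 1))) :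
    ∃ v, ∀ᶠ i in atTop, π i ∉ B (m v) := by
  obtain ⟨v, hv, hmin⟩ := exists_frequently_eq_and_eventually_le π m
  have hstall : ∀ᶠ i in atTop, m (π i) = m v → π i ∉ B (m v) ∧ m (π (i + 1)) = m v := by
    filter_upwards [hprog, eventually_frequently_eq π, eventually_succ_iff.mpr hmin]
      with i hi hrec hnext heq
    rw [Progress, heq] at hi
    rcases hi with hlt | ⟨u, hu, hlt⟩ | hi
    · exact absurd hlt hnext.not_gt
    · obtain ⟨j, ⟨_, rfl⟩, hj⟩ := ((hfair.frequently hu hrec).and_eventually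
        (eventually_succ_iff.mpr hmin)).exists
      exact absurd hlt hj.not_gt
    · exact hi
  have hconst : ∀ᶠ i in atTop, m (π i) = m v :=
    eventually_of_frequently_of_step (hv.mono fun _ hi => congrArg m hi)
      (hstall.mono fun i hi h => (hi h).2)
  exact ⟨v, by filter_upwards [hstall, hconst] with i hi h using (hi h).1⟩

theorem exists_measure_mem_cpre_progress [LinearOrder ι] [WellFoundedLT ι] [Nonempty ι]
    {A : ι → Set V} {F Z : Set V} (hZ : Gm.gr1Reach A F Z = Z) :
    ∃ m : V → Ordinal.{u} ×ₗ ι, ∀ v ∈ Z, v ∈ Gm.cpre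
      {w | w ∈ Z ∧ (v ∈ F ∨ Gm.Progress m (fun p => A (ofLex p).2) v w)} := by
  obtain ⟨m, hm⟩ := exists_measure_lfpSet_iUnion fun a => Gm.monotone_gfpSet_gr1Body (A a) F Z
  change ∀ v ∈ Gm.gr1Reach A F Z, _ at hm
  refine ⟨m, fun v hv => ?_⟩
  obtain ⟨hvG, hG⟩ := hm v (hZ.ge hv)
  change ∀ w ∈ _, w ∈ Gm.gr1Reach A F Z ∧ _ at hG
  rw [← map_gfpSet (Gm.monotone_gr1Body _ _ _ _)] at hvG
  have hlower {w} (hw : w ∈ lowerStages (Gm.gr1Reach A F Z) m (m v)) : w ∈ Z := hZ.le hw.1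
  rcases hvG with (⟨hF, hv⟩ | hv | ⟨⟨u, hvu, hu⟩, hv⟩) | ⟨hA, hv⟩
  · refine Gm.cpre_mono (fun w hw => ?_) hv
    exact ⟨hw, Or.inl hF⟩
  · refine Gm.cpre_mono (fun w hw => ?_) hv
    exact ⟨hlower hw, Or.inr (Or.inl (lt_of_mem_lowerStages hw))⟩
  · refine Gm.cpre_mono (fun w hw => ?_) (Or.inr hv)
    exact ⟨hw, Or.inr (Or.inr (Or.inl ⟨u, hvu, lt_of_mem_lowerStages hu⟩))⟩
  · refine Gm.cpre_mono (fun w hw => ?_) hv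
    exact ⟨hZ.le (hG w hw).1,
      Or.inr ((hG w hw).2.lt_or_eq.imp_right fun heq => Or.inr ⟨hA, heq⟩)⟩

theorem exists_positional_progress [LinearOrder ι] [WellFoundedLT ι] [Nonempty ι]
    {A : ι → Set V} {F Z : Set V} (hZ : Gm.gr1Reach A F Z = Z) :
    ∃ (m : V → Ordinal.{u} ×ₗ ι) (c : V → V), (∀ v, Gm.E v (c v)) ∧
      ∀ v ∈ Z, ∀ w, Gm.E v w → (v ∈ Gm.V0 → w = c v) →
        w ∈ Z ∧ (v ∈ F ∨ Gm.Progress m (fun p => A (ofLex p).2) v w) := by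
  obtain ⟨m, hm⟩ := Gm.exists_measure_mem_cpre_progress hZ
  exact ⟨m, Gm.exists_positional_of_mem_cpre hm⟩

variable {Gm} in
theorem StronglyFair.gr1_of_progress [Finite V] [LinearOrder P] {n : ℕ} [NeZero n]
    {A : ι → Set V} {F : Fin n → Set V} [∀ k, DecidablePred (· ∈ F k)] {m : Fin n → V → P}
    {idx : P → ι} {π : ℕ → V} {q : ℕ → Fin n} (hfair : Gm.StronglyFair π)
    (hq : ∀ i, q (i + 1) = if π i ∈ F (q i) then q i + 1 else q i)
    (hprog : ∀ i, π i ∈ F (q i) ∨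
      Gm.Progress (m (q i)) (fun p => A (idx p)) (π i) (π (i + 1))) :
    GR1 A F π := by
  intro hA
  refine frequently_round_robin (P := fun k i => π i ∈ F k) hq fun hmiss => ?_
  obtain ⟨i₀, hi₀⟩ := (eventually_frequently_eq q).exists
  have hconst : ∀ᶠ i in atTop, q i = q i₀ := eventually_of_frequently_of_step hi₀
    (hmiss.mono fun i hi h => by rw [hq, if_neg hi, h])
  obtain ⟨v, hv⟩ := hfair.exists_eventually_notMem_of_progress
    (by filter_upwards [hmiss, hconst] with i hi h using h ▸ (hprog i).resolve_left hi)
  exact hA _ hv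

theorem exists_finite_memory_winsFrom [Finite V] [Nonempty ι] [Nonempty κ]
    {A : ι → Set V} {F : κ → Set V} {Z : Set V} (hZ : ∀ b, Gm.gr1Reach A (F b) Z = Z) :
    ∃ (M : Type) (_ : Fintype M) (m₀ : M) (upd : M → V → M) (c : M → V → V),
      (∀ m v, v ∈ Gm.V0 → Gm.E v (c m v)) ∧
      ∀ v₀ ∈ Z, Gm.WinsFrom (GR1 A F) (fun h v => c (List.foldl upd m₀ h) v) v₀ := by
  classical
  obtain ⟨_, _⟩ := exists_wellFoundedLT ι
  obtain ⟨n, _, p, hp⟩ := exists_fin_enumeration F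
  choose m c hcE hc using fun k => Gm.exists_positional_progress (hZ (p k))
  let upd : Fin n → V → Fin n := fun k v => if v ∈ F (p k) then k + 1 else k
  refine ⟨Fin n, inferInstance, 0, upd, c, fun k v _ => hcE k v, fun v₀ hv₀ => ?_⟩
  have hρ0 : Gm.Strategy0 fun h v => c (List.foldl upd 0 h) v := fun _ v _ => hcE _ v
  refine ⟨hρ0, fun ρ1 hρ1 π hπ hfair => ?_⟩
  let q : ℕ → Fin n := fun i => List.foldl upd 0 (List.ofFn fun j : Fin i => π j.1)
  have hq (i) : q (i + 1) = upd (q i) (π i) := by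
    simp only [q, ofFn_fin_succ, List.foldl_append, List.foldl_cons, List.foldl_nil]
  have hstep (i) (hi : π i ∈ Z) := hc (q i) (π i) hi _ (hπ.edge hρ0 hρ1 i) (hπ.2 i).1
  have hmem (i) : π i ∈ Z := by
    induction i with
    | zero => exact hπ.1 ▸ hv₀
    | succ i ih => exact (hstep i ih).1
  have hgoals : GR1 A (fun k => F (p k)) π :=
    hfair.gr1_of_progress hq fun i => (hstep i (hmem i)).2
  intro hA b
  obtain ⟨k, hk⟩ := hp b
  exact hk ▸ hgoals hA k

end Soundness

section Completeness

variable {ι κ : Type*} {π : ℕ → V}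

variable {Gm} in
theorem FairToward.mono {C C' : V → Set V} (hπ : Gm.FairToward C π)
    (hC : ∀ᶠ i in atTop, C' (π i) ⊆ C (π i)) : Gm.FairToward C' π := by
  intro v h1 hv w hw
  obtain ⟨i, rfl, hi⟩ := (hv.and_eventually hC).exists
  exact hπ _ h1 hv w (hi hw)

variable {Gm} in
theorem FairToward.eventually_mem_cpre [Finite V] (hπ : Gm.FairToward (fun _ => Tᶜ) π)
    (hE : ∀ i, Gm.E (π i) (π (i + 1))) (hT : ∀ᶠ i in atTop, π i ∈ T) :
    ∀ᶠ i in atTop, π i ∈ Gm.cpre T := by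
  filter_upwards [eventually_frequently_eq π, eventually_succ_iff.mpr hT] with i hrec hnext
  rcases Gm.mem_V0_or_mem_V1 (π i) with h0 | h1
  · exact (mem_cpre_iff_of_mem_V0 h0).mpr ⟨_, hE i, hnext⟩
  · refine (mem_cpre_iff_of_mem_V1 h1).mpr fun w hw => by_contra fun hwT => ?_
    obtain ⟨j, ⟨_, rfl⟩, hj⟩ :=
      ((hπ _ h1 hrec w hwT hw).and_eventually (eventually_succ_iff.mpr hT)).exists
    exact hwT hj

variable {Gm} in
theorem FairToward.stronglyFair [Nonempty ι] {A : ι → Set V} {F Y : Set V}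
    (hπ : Gm.FairToward (fun _ => (Gm.gr1Reach A F Y)ᶜ) π)
    (hY : ∀ᶠ i in atTop, π i ∈ Gm.cpre Y) (hL : ∀ᶠ i in atTop, π i ∉ Gm.gr1Reach A F Y) :
    Gm.StronglyFair π := by
  intro v w hvw hv
  rw [← Nat.frequently_atTop_iff_infinite] at hv ⊢
  obtain ⟨h1, hE⟩ := Gm.live_sub v w hvw
  obtain ⟨_, rfl, hvY, hvL⟩ := (hv.and_eventually (hY.and hL)).exists
  exact hπ _ h1 hv w (fun hw => hvL (Gm.apre_gr1Reach_subset_gr1Reach A F Y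
    (Or.inr ⟨⟨w, hvw, hw⟩, h1, (mem_cpre_iff_of_mem_V1 h1).mp hvY⟩))) hE

variable {Gm} in
theorem FairToward.frequently_mem [Finite V] {A : ι → Set V} {F Y : Set V}
    (hπ : Gm.FairToward (fun _ => (Gm.gr1Reach A F Y)ᶜ) π)
    (hE : ∀ i, Gm.E (π i) (π (i + 1)))
    (hL : ∀ᶠ i in atTop, π i ∉ Gm.gr1Reach A F Y) (a : ι) : ∃ᶠ i in atTop, π i ∈ A a := by
  intro hA
  obtain ⟨rk, hrk⟩ :=
    exists_rank_compl_gfpSet (Gm.monotone_gr1Body (A a) F Y (Gm.gr1Reach A F Y))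
  rw [gfpSet_gr1Body_gr1Reach] at hrk
  obtain ⟨v, hv, hmin⟩ := exists_frequently_eq_and_eventually_le π rk
  have hcpre : ∀ᶠ i in atTop,
      π i ∈ Gm.cpre {w | w ∉ Gm.gr1Reach A F Y ∧ rk w < rk v}ᶜ :=
    (hπ.mono (.of_forall fun _ w hw => (not_not.mp hw).1)).eventually_mem_cpre hE
      (hmin.mono fun i hi h => hi.not_gt h.2)
  obtain ⟨_, rfl, hvA, hvL, hvcpre⟩ := (hv.and_eventually (hA.and (hL.and hcpre))).exists
  exact hrk _ hvL (Or.inr ⟨hvA, hvcpre⟩)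

variable {Gm} in
theorem FairToward.stronglyFair_and_not_gr1 [Finite V] [Nonempty ι] {A : ι → Set V}
    {F : κ → Set V} {Y : Set V} {b : κ}
    (hπ : Gm.FairToward (fun _ => Yᶜ ∪ (Gm.gr1Reach A (F b) Y)ᶜ) π)
    (hE : ∀ i, Gm.E (π i) (π (i + 1))) (hY : ∀ᶠ i in atTop, π i ∈ Y)
    (hL : ∀ᶠ i in atTop, π i ∉ Gm.gr1Reach A (F b) Y) :
    Gm.StronglyFair π ∧ ¬ GR1 A F π := by
  have hπL : Gm.FairToward (fun _ => (Gm.gr1Reach A (F b) Y)ᶜ) π :=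
    hπ.mono (.of_forall fun _ => Set.subset_union_right)
  have hcpre : ∀ᶠ i in atTop, π i ∈ Gm.cpre Y :=
    (hπ.mono (.of_forall fun _ => Set.subset_union_left)).eventually_mem_cpre hE hY
  refine ⟨hπL.stronglyFair hcpre hL, fun hgr1 => hgr1 (hπL.frequently_mem hE hL) b ?_⟩
  filter_upwards [hcpre, hL] with i hi hiL hF
  exact hiL (Gm.inter_cpre_subset_gr1Reach A (F b) Y ⟨hF, hi⟩)

variable {Gm} in
theorem FairToward.stronglyFair_and_not_gr1_of_measure [Finite V] [Nonempty ι] {P : Type*}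
    [LinearOrder P] {A : ι → Set V} {F : κ → Set V} {m : V → P} {idx : P → κ} {Y : P → Set V}
    (hπ : Gm.FairToward
      (fun v => (Y (m v))ᶜ ∪ (Gm.gr1Reach A (F (idx (m v))) (Y (m v)))ᶜ) π)
    (hE : ∀ i, Gm.E (π i) (π (i + 1))) (hm : ∀ i, m (π (i + 1)) ≤ m (π i))
    (hY : ∀ i, π (i + 1) ∉ Y (m (π i)) → m (π (i + 1)) < m (π i))
    (hL : ∀ i, π i ∉ Gm.gr1Reach A (F (idx (m (π i)))) (Y (m (π i)))) :
    Gm.StronglyFair π ∧ ¬ GR1 A F π := by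
  obtain ⟨v, hconst⟩ := exists_eventually_eq_of_succ_le π m hm
  refine FairToward.stronglyFair_and_not_gr1 (Y := Y (m v)) (b := idx (m v))
    (hπ.mono (hconst.mono fun i hi => ?_)) hE (eventually_succ_iff.mp ?_)
    (hconst.mono fun i hi => hi ▸ hL i)
  · rw [hi]
  · filter_upwards [hconst, eventually_succ_iff.mpr hconst] with i hi hnext
    by_contra hnot
    exact (hY i (hi ▸ hnot)).ne (hnext.trans hi.symm)

theorem exists_measure_compl_gr1Fixpoint [LinearOrder κ] [WellFoundedLT κ] [Nonempty κ]
    (A : ι → Set V) (F : κ → Set V) :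
    ∃ (m : V → Ordinal.{u} ×ₗ κ) (Y : Ordinal.{u} ×ₗ κ → Set V), ∀ v ∉ Gm.gr1Fixpoint A F,
      v ∉ Gm.gr1Reach A (F (ofLex (m v)).2) (Y (m v)) ∧
      (∀ w ∉ Gm.gr1Reach A (F (ofLex (m v)).2) (Y (m v)),
        w ∉ Gm.gr1Fixpoint A F ∧ m w ≤ m v) ∧
      ∀ w ∉ Y (m v), w ∉ Gm.gr1Fixpoint A F ∧ m w < m v := by
  have hcompl : (Gm.gr1Fixpoint A F)ᶜ = lfpSet fun S => ⋃ b, (Gm.gr1Reach A (F b) Sᶜ)ᶜ := by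
    simp only [gr1Fixpoint, compl_gfpSet, gr1Round, Set.compl_iInter]
  obtain ⟨m, hm⟩ := exists_measure_lfpSet_iUnion fun b =>
    monotone_compl_map_compl (Gm.monotone_gr1Reach A (F b))
  rw [← hcompl] at hm
  refine ⟨m, fun p => (lowerStages (Gm.gr1Fixpoint A F)ᶜ m p)ᶜ, fun v hv => ?_⟩
  obtain ⟨hvL, hL⟩ := hm v hv
  refine ⟨hvL, hL, fun w hw => ?_⟩
  rw [Set.notMem_compl_iff] at hw
  exact ⟨hw.1, lt_of_mem_lowerStages hw⟩

variable {Gm} in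
theorem mem_of_edge_of_notMem_cpre {C : Set V} {w : V} (hv : v ∉ Gm.cpre S) (hE : Gm.E v w)
    (hC : Sᶜ ⊆ C) (h1 : v ∈ Gm.V1 → (∃ w ∈ C, Gm.E v w) → w ∈ C) : w ∈ C := by
  rcases Gm.mem_V0_or_mem_V1 v with h0 | hv1
  · exact hC fun hw => hv ((mem_cpre_iff_of_mem_V0 h0).mpr ⟨w, hE, hw⟩)
  · rw [mem_cpre_iff_of_mem_V1 hv1] at hv
    push Not at hv
    obtain ⟨w', hvw', hw'⟩ := hv
    exact h1 hv1 ⟨w', hC hw', hvw'⟩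

theorem not_winsFrom_of_notMem_gr1Fixpoint [Finite V] [Nonempty ι] [Nonempty κ] {A : ι → Set V}
    {F : κ → Set V} {v₀ : V} (hv₀ : v₀ ∉ Gm.gr1Fixpoint A F) (ρ0 : List V → V → V) :
    ¬ Gm.WinsFrom (GR1 A F) ρ0 v₀ := by
  rintro ⟨hρ0, hwin⟩
  obtain ⟨_, _⟩ := exists_wellFoundedLT κ
  obtain ⟨m, Y, hm⟩ := Gm.exists_measure_compl_gr1Fixpoint A F
  let L (p : Ordinal.{u} ×ₗ κ) : Set V := Gm.gr1Reach A (F (ofLex p).2) (Y p)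
  obtain ⟨ρ1, hρ1, hrobin⟩ := Gm.exists_strategy1_round_robin fun v => (Y (m v))ᶜ ∪ (L (m v))ᶜ
  obtain ⟨π, hπ⟩ := Gm.exists_compliant ρ0 ρ1 v₀
  obtain ⟨hmove, hfair⟩ := hrobin ρ0 v₀ π hπ
  have hE := hπ.edge hρ0 hρ1
  have hstep (i) (hi : π i ∉ Gm.gr1Fixpoint A F) :
      π (i + 1) ∉ Gm.gr1Fixpoint A F ∧ m (π (i + 1)) ≤ m (π i) := by
    obtain ⟨hiL, hL, hY⟩ := hm _ hi
    have hcpre : π i ∉ Gm.cpre (L (m (π i))) := fun h =>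
      hiL (Gm.apre_gr1Reach_subset_gr1Reach A _ _ (Or.inl h))
    rcases mem_of_edge_of_notMem_cpre hcpre (hE i) Set.subset_union_right (hmove i) with h | h
    · exact (hY _ h).imp_right le_of_lt
    · exact hL _ h
  have hZ (i) : π i ∉ Gm.gr1Fixpoint A F := by
    induction i with
    | zero => exact hπ.1 ▸ hv₀
    | succ i ih => exact (hstep i ih).1
  obtain ⟨hsf, hlose⟩ := hfair.stronglyFair_and_not_gr1_of_measure hE
    (fun i => (hstep i (hZ i)).2) (fun i h => ((hm _ (hZ i)).2.2 _ h).2) fun i => (hm _ (hZ i)).1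
  exact hlose (hwin ρ1 hρ1 π hπ hsf)

end Completeness

theorem gr1Fixpoint_subtype (s : Finset ι) (t : Finset κ) (A : ι → Set V) (F : κ → Set V) :
    Gm.gr1Fixpoint (fun a : s => A a) (fun b : t => F b) =
      gfpSet fun Y => ⋂ b ∈ t, lfpSet fun X => ⋃ a ∈ s, gfpSet fun W =>
        (F b ∩ Gm.cpre Y) ∪ Gm.apre Y X ∪ ((A a)ᶜ ∩ Gm.cpre W) := by
  change gfpSet (fun Y => ⋂ b : t, lfpSet fun X => ⋃ a : s, gfpSet (Gm.gr1Body (A a) (F b) Y X)) = _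
  simp only [Set.iInter_subtype, Set.iUnion_subtype]
  rfl

theorem GR1_subtype (s : Finset ι) (t : Finset κ) (A : ι → Set V) (F : κ → Set V) :
    GR1 (fun a : s => A a) (fun b : t => F b) = fun π =>
      (∀ a ∈ s, ∀ N, ∃ i ≥ N, π i ∈ A a) → ∀ b ∈ t, ∀ N, ∃ i ≥ N, π i ∈ F b := by
  ext π
  simp only [GR1, frequently_atTop, Subtype.forall]

end LiveGameGraph

open LiveGameGraph in
theorem fair_adversarial_gr1_general {V ι κ : Type*} [Finite V] [Nonempty ι] [Nonempty κ]
    (Gm : LiveGameGraph V) (A : ι → Set V) (F : κ → Set V) :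
    Gm.gr1Fixpoint A F = Gm.WinningRegion (GR1 A F) ∧
    ∃ (M : Type) (_ : Fintype M) (m₀ : M) (upd : M → V → M) (c : M → V → V),
      (∀ m v, v ∈ Gm.V0 → Gm.E v (c m v)) ∧
      ∀ v₀ ∈ Gm.gr1Fixpoint A F,
        Gm.WinsFrom (GR1 A F) (fun h v => c (List.foldl upd m₀ h) v) v₀ := by
  obtain ⟨M, hM, m₀, upd, c, hc, hwin⟩ :=
    Gm.exists_finite_memory_winsFrom (Gm.gr1Reach_gr1Fixpoint A F)
  refine ⟨Set.Subset.antisymm (fun v₀ hv₀ => ⟨_, hwin v₀ hv₀⟩) ?_, M, hM, m₀, upd, c, hc, hwin⟩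
  rintro v₀ ⟨ρ0, hρ0⟩
  by_contra hv₀
  exact Gm.not_winsFrom_of_notMem_gr1Fixpoint hv₀ ρ0 hρ0

/-- the GR(1) fixpoint equals the winning region of Player 0 in the
fair adversarial GR(1) game, and a finite-memory winning Player-0 strategy exists
on it. -/
theorem fair_adversarial_gr1 {V : Type*} [Fintype V]
    (Gm : LiveGameGraph V) (r s : ℕ) (hr : 1 ≤ r) (hs : 1 ≤ s)
    (A F : ℕ → Set V) (Zstar : Set V)
    (hZ : Zstar = gfpSet fun Yk => ⋂ b ∈ Finset.Icc 1 s, lfpSet fun Xb =>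
      ⋃ a ∈ Finset.Icc 1 r, gfpSet fun Ya =>
        (F b ∩ Gm.cpre Yk) ∪ Gm.apre Yk Xb ∪ ((A a)ᶜ ∩ Gm.cpre Ya)) :
    Zstar = Gm.WinningRegion
        (fun π => (∀ a ∈ Finset.Icc 1 r, ∀ N, ∃ i ≥ N, π i ∈ A a) →
          ∀ b ∈ Finset.Icc 1 s, ∀ N, ∃ i ≥ N, π i ∈ F b) ∧
    ∃ (M : Type) (_ : Fintype M) (m0 : M) (upd : M → V → M) (c : M → V → V),
      (∀ m v, v ∈ Gm.V0 → Gm.E v (c m v)) ∧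
      ∀ v0 ∈ Zstar,
        Gm.WinsFrom
          (fun π => (∀ a ∈ Finset.Icc 1 r, ∀ N, ∃ i ≥ N, π i ∈ A a) →
            ∀ b ∈ Finset.Icc 1 s, ∀ N, ∃ i ≥ N, π i ∈ F b)
          (fun h v => c (List.foldl upd m0 h) v) v0 := by
  have : Nonempty (Finset.Icc 1 r) := (Finset.nonempty_Icc.mpr hr).to_subtype
  have : Nonempty (Finset.Icc 1 s) := (Finset.nonempty_Icc.mpr hs).to_subtype
  subst hZ
  simpa only [LiveGameGraph.gr1Fixpoint_subtype, LiveGameGraph.GR1_subtype] using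
    fair_adversarial_gr1_general Gm
      (fun a : Finset.Icc 1 r => A a) (fun b : Finset.Icc 1 s => F b)
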